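/- (Uniform weighted bound for the marginals of admissible hard-sphere initial data.) Let β₀ > 0, μ₀ ∈ ℝ, γ > 0 and let f^in : ℝ³ × ℝ³ → ℝ be continuous with 0 ≤ f^in(x,v) ≤ e^{−μ₀ − β₀|v|²/2} and ∬_{ℝ³×ℝ³} f^in(x,v) dx dv = 1. For N ≥ 1 set r := (1/2)√(γ/N), Z_N := ∫_{Γ^r_N} ∏_{i=1}^N f^in(x_i,v_i) dX_N dV_N, and (when Z_N > 0) F^in_N := Z_N^{-1} 1_{Ω^r_N}(X_N) ∏_{i=1}^N f^in(x_i,v_i), with marginals F^in_{N:k}(X_k,V_k) := ∫_{(ℝ³)^{N−k}×(ℝ³)^{N−k}} F^in_N(X_N,V_N) dx_{k+1}…dx_N dv_{k+1}…dv_N for 1 ≤ k ≤ N and F^in_{N:k} := 0 for k > N. Then there exists N₀ such that Z_N > 0 for all N ≥ N₀, and there exists μ₁ ≤ μ₀ such that sup_{N ≥ N₀} ‖(F^in_{N:k})_{k≥1}‖_{μ₁,β₀} < ∞. -/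

import Mathlib

open MeasureTheory Real
open scoped ENNReal

noncomputable section

abbrev R3 : Type := EuclideanSpace ℝ (Fin 3)

/-- The weighted norm `|g|_{k,β} := ess sup |g(X_k,V_k)| exp(β|V_k|²/2)`, valued in `ℝ≥0∞`. -/
noncomputable def wnorm (k : ℕ) (β : ℝ) (g : (Fin k → R3) → (Fin k → R3) → ℝ) : ℝ≥0∞ :=
  essSup (fun Z : (Fin k → R3) × (Fin k → R3) =>
    ENNReal.ofReal (|g Z.1 Z.2| * exp (β * (∑ j, ‖Z.2 j‖ ^ 2) / 2))) volume

/-- The norm `‖(g_n)_{n≥1}‖_{μ,β} := sup_{n ≥ 1} |g_n|_{n,β} e^{μn}`, valued in `ℝ≥0∞`. -/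
noncomputable def seqnorm (μ β : ℝ)
    (g : (n : ℕ) → (Fin n → R3) → (Fin n → R3) → ℝ) : ℝ≥0∞ :=
  ⨆ n : ℕ, wnorm (n + 1) β (g (n + 1)) * ENNReal.ofReal (exp (μ * (n + 1)))

/-- The set `Ω^r_m` of admissible positions of `m` hard spheres of radius `r`. -/
def OmegaSet (m : ℕ) (r : ℝ) : Set (Fin m → R3) :=
  {X | ∀ i j : Fin m, i ≠ j → 2 * r < dist (X i) (X j)}

/-- The Boltzmann–Grad radius `r = (1/2)√(γ/N)`. -/
noncomputable def rBG (γ : ℝ) (N : ℕ) : ℝ := (1 / 2) * Real.sqrt (γ / N)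

/-- The normalization constant `Z_N = ∫_{Γ^r_N} ∏ f^in(x_i,v_i) dX_N dV_N`. -/
noncomputable def ZN (f : R3 → R3 → ℝ) (N : ℕ) (r : ℝ) : ℝ :=
  ∫ Z : (Fin N → R3) × (Fin N → R3),
    (OmegaSet N r).indicator (fun _ => (1 : ℝ)) Z.1 * ∏ i, f (Z.1 i) (Z.2 i)

/-- The admissible `N`-particle initial distribution
`F^in_N = Z_N⁻¹ 1_{Ω^r_N} ∏ f^in(x_i,v_i)`. -/
noncomputable def FinitN (f : R3 → R3 → ℝ) (N : ℕ) (r : ℝ) (X V : Fin N → R3) : ℝ :=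
  (ZN f N r)⁻¹ * (OmegaSet N r).indicator (fun _ => (1 : ℝ)) X * ∏ i, f (X i) (V i)

/-- Completion of a `k`-tuple by an `(N-k)`-tuple into an `N`-tuple. -/
def combine {N k : ℕ} (hk : k ≤ N) (X : Fin k → R3) (W : Fin (N - k) → R3) : Fin N → R3 :=
  fun i => if h : (i : ℕ) < k then X ⟨i, h⟩ else W ⟨(i : ℕ) - k, by have := i.isLt; omega⟩

/-- The `k`-th marginal of an `N`-particle distribution. -/
noncomputable def marginal (N k : ℕ) (hk : k ≤ N) (F : (Fin N → R3) → (Fin N → R3) → ℝ)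
    (X V : Fin k → R3) : ℝ :=
  ∫ W : (Fin (N - k) → R3) × (Fin (N - k) → R3), F (combine hk X W.1) (combine hk V W.2)

/-- The family of all marginals of an `N`-particle distribution (`0` for `k > N`). -/
noncomputable def margFam (N : ℕ) (F : (Fin N → R3) → (Fin N → R3) → ℝ) :
    (k : ℕ) → (Fin k → R3) → (Fin k → R3) → ℝ :=
  fun k => if hk : k ≤ N then marginal N k hk F else fun _ _ => 0

/-! With the radius `r = r_N` fixed, `Z_m` is the probability that `m` independent particles with
law `f` do not overlap. Adding a particle to fewer than `N` others is blocked with probability at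
most `N κ_N`, where `κ_N` bounds the mass that `f` gives to `B(x, 2r) × ℝ³`. By the Gaussian bound
on `f` this mass is at most a constant times the volume `O(N^{-3/2})` of the ball, so `N κ_N → 0`.
Hence for each `θ < 1` one has `Z_{N-k} ≤ θ^{-k} Z_N` for all `k ≤ N` once `N` is large, and
forgetting the exclusion between the first `k` particles and all others gives
`F_{N:k} ≤ (Z_{N-k} / Z_N) ∏_{i ≤ k} f(x_i, v_i) ≤ θ^{-k} ∏_{i ≤ k} f(x_i, v_i)`. -/

open Filter Function Metric Topology

section CompatibleConfigs

variable {α : Type*} {R : α → α → Prop}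

/-- The configurations of `n` points any two of which are `R`-compatible. Under the product measure
`μ^n` its mass is the partition function of `n` points with a hard-core interaction. -/
def compatibleConfigs (R : α → α → Prop) (n : ℕ) : Set (Fin n → α) :=
  {x | Pairwise (R on x)}

lemma cons_mem_compatibleConfigs_iff [Std.Symm R] {n : ℕ} {a : α} {x : Fin n → α} :
    (Fin.cons a x : Fin (n + 1) → α) ∈ compatibleConfigs R (n + 1) ↔
      (∀ i, R a (x i)) ∧ x ∈ compatibleConfigs R n :=
  pairwise_fin_succ_iff_of_isSymm

variable [MeasurableSpace α] {μ : Measure α}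

lemma measurableSet_compatibleConfigs (hR : MeasurableSet {p : α × α | R p.1 p.2}) (n : ℕ) :
    MeasurableSet (compatibleConfigs R n) := by
  simp only [compatibleConfigs, Pairwise, onFun, Set.ofPred_forall]
  exact .iInter fun i => .iInter fun j => .iInter fun _ => hR.preimage
    (by fun_prop : Measurable fun x : Fin n → α => (x i, x j))

lemma one_sub_card_mul_le_measure_iInter [IsProbabilityMeasure μ] {ι : Type*} [Fintype ι]
    {s : ι → Set α} {κ : ℝ≥0∞} (hs : ∀ i, μ (s i)ᶜ ≤ κ) :
    1 - Fintype.card ι * κ ≤ μ (⋂ i, s i) := by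
  have hunion : μ (⋂ i, s i)ᶜ ≤ Fintype.card ι * κ := by
    calc μ (⋂ i, s i)ᶜ ≤ ∑ i, μ (s i)ᶜ := by
          rw [Set.compl_iInter]
          exact measure_iUnion_fintype_le μ _
      _ ≤ Fintype.card ι * κ := by
          simpa [Finset.card_univ] using
            Finset.sum_le_card_nsmul Finset.univ _ κ fun i _ => hs i
  calc 1 - Fintype.card ι * κ ≤ 1 - μ (⋂ i, s i)ᶜ := tsub_le_tsub_left hunion 1
    _ ≤ μ (⋂ i, s i) := tsub_le_iff_right.2 <| by
      simpa using measure_univ_le_add_compl (μ := μ) (⋂ i, s i)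

lemma one_sub_mul_pi_compatibleConfigs_le [Std.Symm R] [IsProbabilityMeasure μ]
    (hR : MeasurableSet {p : α × α | R p.1 p.2}) {κ : ℝ≥0∞} (hκ : ∀ b, μ {a | ¬R a b} ≤ κ)
    (n : ℕ) :
    (1 - n * κ) * Measure.pi (fun _ => μ) (compatibleConfigs R n) ≤
      Measure.pi (fun _ => μ) (compatibleConfigs R (n + 1)) := by
  have hcons : MeasurePreserving (fun p : α × (Fin n → α) => (Fin.cons p.1 p.2 : Fin (n + 1) → α))
      (μ.prod (Measure.pi fun _ => μ)) (Measure.pi fun _ => μ) := by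
    convert! (measurePreserving_piFinSuccAbove (fun _ : Fin (n + 1) => μ) 0).symm using 1
    funext p
    exact (Fin.insertNth_zero' p.1 p.2).symm
  have hfiber (x : Fin n → α) (hx : x ∈ compatibleConfigs R n) :
      1 - n * κ ≤ μ {a | (Fin.cons a x : Fin (n + 1) → α) ∈ compatibleConfigs R (n + 1)} := by
    simp only [cons_mem_compatibleConfigs_iff, hx, and_true, Set.ofPred_forall]
    simpa using one_sub_card_mul_le_measure_iInter (s := fun i => {a | R a (x i)}) fun i => hκ (x i)
  have hmeas := measurableSet_compatibleConfigs hR (n + 1)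
  rw [← hcons.measure_preimage hmeas.nullMeasurableSet,
    Measure.prod_apply_symm (hcons.measurable hmeas), ← setLIntegral_const]
  calc ∫⁻ _ in compatibleConfigs R n, (1 - n * κ) ∂Measure.pi (fun _ => μ)
      ≤ ∫⁻ x in compatibleConfigs R n,
          μ {a | (Fin.cons a x : Fin (n + 1) → α) ∈ compatibleConfigs R (n + 1)}
          ∂Measure.pi (fun _ => μ) :=
        setLIntegral_mono' (measurableSet_compatibleConfigs hR n) hfiber
    _ ≤ _ := setLIntegral_le_lintegral _ _

lemma one_sub_mul_pow_mul_pi_compatibleConfigs_le [Std.Symm R] [IsProbabilityMeasure μ]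
    (hR : MeasurableSet {p : α × α | R p.1 p.2}) {κ : ℝ≥0∞} (hκ : ∀ b, μ {a | ¬R a b} ≤ κ)
    {m n : ℕ} (hmn : m ≤ n) :
    (1 - n * κ) ^ (n - m) * Measure.pi (fun _ => μ) (compatibleConfigs R m) ≤
      Measure.pi (fun _ => μ) (compatibleConfigs R n) := by
  induction n, hmn using Nat.le_induction with
  | base => simp
  | succ n hmn ih =>
    have hmono : 1 - (n + 1 : ℕ) * κ ≤ 1 - n * κ := by gcongr; omega
    rw [Nat.succ_sub hmn, pow_succ', mul_assoc]
    calc _ ≤ (1 - n * κ) * ((1 - n * κ) ^ (n - m) *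
          Measure.pi (fun _ => μ) (compatibleConfigs R m)) := by gcongr
      _ ≤ (1 - n * κ) * Measure.pi (fun _ => μ) (compatibleConfigs R n) := by gcongr
      _ ≤ _ := one_sub_mul_pi_compatibleConfigs_le hR hκ n

end CompatibleConfigs

lemma pi_withDensity_ofReal {ι : Type*} [Fintype ι] {α : ι → Type*} [∀ i, MeasurableSpace (α i)]
    {μ : ∀ i, Measure (α i)} [∀ i, SigmaFinite (μ i)] {f : ∀ i, α i → ℝ}
    (hf₀ : ∀ i a, 0 ≤ f i a) (hf : ∀ i, Integrable (f i) (μ i)) :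
    Measure.pi (fun i => (μ i).withDensity fun a => ENNReal.ofReal (f i a)) =
      (Measure.pi μ).withDensity fun x => ENNReal.ofReal (∏ i, f i (x i)) := by
  have (i : ι) := isFiniteMeasure_withDensity_ofReal (hf i).2
  refine Measure.pi_eq fun s hs => ?_
  rw [withDensity_apply _ (.univ_pi hs), Measure.restrict_pi_pi,
    ← ofReal_integral_eq_lintegral_ofReal (.fintype_prod_dep fun i => (hf i).restrict)
      (.of_forall fun x => Finset.prod_nonneg fun i _ => hf₀ i (x i)),
    integral_fintype_prod_eq_prod,
    ENNReal.ofReal_prod_of_nonneg fun i _ => integral_nonneg (hf₀ i)]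
  refine Finset.prod_congr rfl fun i _ => ?_
  rw [withDensity_apply _ (hs i),
    ofReal_integral_eq_lintegral_ofReal (hf i).restrict (.of_forall (hf₀ i))]

lemma integrable_rexp_neg_mul_sq_norm {V : Type*} [NormedAddCommGroup V] [InnerProductSpace ℝ V]
    [FiniteDimensional ℝ V] [MeasurableSpace V] [BorelSpace V] {b : ℝ} (hb : 0 < b) :
    Integrable fun v : V => exp (-b * ‖v‖ ^ 2) := by
  refine .of_integral_ne_zero ?_
  rw [GaussianFourier.integral_rexp_neg_mul_sq_norm hb]
  positivity

section OneParticleLaw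

variable {f : R3 → R3 → ℝ} {r : ℝ}

/-- The phase points `z`, `w` belong to two spheres of radius `r` which do not touch. -/
def Nonoverlapping (r : ℝ) (z w : R3 × R3) : Prop :=
  2 * r < dist z.1 w.1

/-- The law on phase space with density `f` of one particle of the ideal gas. -/
def oneParticleLaw (f : R3 → R3 → ℝ) : Measure (R3 × R3) :=
  volume.withDensity fun z => ENNReal.ofReal (f z.1 z.2)

instance (r : ℝ) : Std.Symm (Nonoverlapping r) where
  symm z w h := by rwa [Nonoverlapping, dist_comm]

lemma measurableSet_nonoverlapping (r : ℝ) :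
    MeasurableSet {p : (R3 × R3) × (R3 × R3) | Nonoverlapping r p.1 p.2} :=
  measurableSet_lt (by fun_prop) (by fun_prop)

lemma measurableSet_omegaSet (n : ℕ) (r : ℝ) : MeasurableSet (OmegaSet n r) :=
  measurableSet_compatibleConfigs (R := fun x y : R3 => 2 * r < dist x y)
    (measurableSet_lt (by fun_prop) (by fun_prop)) n

lemma isProbabilityMeasure_oneParticleLaw (hf₀ : ∀ x v, 0 ≤ f x v)
    (hf_norm : ∫ z : R3 × R3, f z.1 z.2 = 1) : IsProbabilityMeasure (oneParticleLaw f) where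
  measure_univ := by
    have hf : Integrable fun z : R3 × R3 => f z.1 z.2 :=
      .of_integral_ne_zero (hf_norm ▸ one_ne_zero)
    rw [oneParticleLaw, withDensity_apply _ .univ, Measure.restrict_univ,
      ← ofReal_integral_eq_lintegral_ofReal hf (.of_forall fun z => hf₀ _ _), hf_norm,
      ENNReal.ofReal_one]

lemma oneParticleLaw_not_nonoverlapping_le {h : R3 → ℝ} (hh : Measurable h)
    (hfh : ∀ x v, f x v ≤ h v) (w : R3 × R3) :
    oneParticleLaw f {z | ¬Nonoverlapping r z w} ≤
      volume (closedBall (0 : R3) (2 * r)) * ∫⁻ v, ENNReal.ofReal (h v) := by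
  have hset : {z | ¬Nonoverlapping r z w} = closedBall w.1 (2 * r) ×ˢ (Set.univ : Set R3) := by
    ext z
    simp [Nonoverlapping]
  rw [hset, oneParticleLaw,
    withDensity_apply _ (measurableSet_closedBall.prod MeasurableSet.univ)]
  calc ∫⁻ z in closedBall w.1 (2 * r) ×ˢ Set.univ, ENNReal.ofReal (f z.1 z.2)
      ≤ ∫⁻ z in closedBall w.1 (2 * r) ×ˢ Set.univ, ENNReal.ofReal (h z.2) :=
        lintegral_mono fun z => ENNReal.ofReal_le_ofReal (hfh _ _)
    _ = ∫⁻ _ in closedBall w.1 (2 * r), ∫⁻ v, ENNReal.ofReal (h v) := by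
        rw [Measure.volume_eq_prod, ← Measure.prod_restrict, Measure.restrict_univ,
          lintegral_prod _ (by fun_prop)]
    _ = volume (closedBall (0 : R3) (2 * r)) * ∫⁻ v, ENNReal.ofReal (h v) := by
        rw [setLIntegral_const, mul_comm, Measure.addHaar_closedBall_center]

lemma integrable_indicator_mul_prod (hf : Integrable fun z : R3 × R3 => f z.1 z.2)
    (n : ℕ) (r : ℝ) :
    Integrable fun Z : (Fin n → R3) × (Fin n → R3) =>
      (OmegaSet n r).indicator (fun _ => (1 : ℝ)) Z.1 * ∏ i, f (Z.1 i) (Z.2 i) := by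
  have hprod : Integrable fun Z : (Fin n → R3) × (Fin n → R3) => ∏ i, f (Z.1 i) (Z.2 i) :=
    ((volume_measurePreserving_arrowProdEquivProdArrow R3 R3 (Fin n)).integrable_comp_emb
      (MeasurableEquiv.measurableEmbedding _)).1 (.fintype_prod fun _ => hf)
  refine (hprod.indicator ((measurableSet_omegaSet n r).preimage measurable_fst)).congr
    (.of_forall fun Z => ?_)
  by_cases hZ : Z.1 ∈ OmegaSet n r <;> simp [hZ]

lemma zN_nonneg (hf₀ : ∀ x v, 0 ≤ f x v) (n : ℕ) (r : ℝ) : 0 ≤ ZN f n r :=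
  integral_nonneg fun _ => mul_nonneg (Set.indicator_nonneg (fun _ _ => zero_le_one) _)
    (Finset.prod_nonneg fun _ _ => hf₀ _ _)

lemma ofReal_zN (hf₀ : ∀ x v, 0 ≤ f x v) (hf : Integrable fun z : R3 × R3 => f z.1 z.2)
    (n : ℕ) (r : ℝ) :
    ENNReal.ofReal (ZN f n r) =
      Measure.pi (fun _ => oneParticleLaw f) (compatibleConfigs (Nonoverlapping r) n) := by
  have hC := measurableSet_compatibleConfigs (measurableSet_nonoverlapping r) n
  have hprod : Integrable fun Z : Fin n → R3 × R3 => ∏ i, f (Z i).1 (Z i).2 :=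
    .fintype_prod fun _ => hf
  have hZ : ZN f n r =
      ∫ Z in compatibleConfigs (Nonoverlapping r) n, ∏ i, f (Z i).1 (Z i).2 := by
    rw [ZN, ← (volume_measurePreserving_arrowProdEquivProdArrow R3 R3 (Fin n)).integral_comp',
      ← integral_indicator hC]
    refine integral_congr_ae (.of_forall fun Z => ?_)
    change (OmegaSet n r).indicator (fun _ => (1 : ℝ)) (fun i => (Z i).1) *
      ∏ i, f (Z i).1 (Z i).2 = _
    have hmem : (fun i => (Z i).1) ∈ OmegaSet n r ↔ Z ∈ compatibleConfigs (Nonoverlapping r) n :=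
      Iff.rfl
    by_cases hZ : Z ∈ compatibleConfigs (Nonoverlapping r) n <;> simp [hZ, hmem]
  rw [hZ, ofReal_integral_eq_lintegral_ofReal hprod.restrict
    (.of_forall fun Z => Finset.prod_nonneg fun _ _ => hf₀ _ _)]
  simp only [oneParticleLaw]
  rw [pi_withDensity_ofReal (fun _ _ => hf₀ _ _) fun _ => hf, withDensity_apply _ hC, volume_pi]

lemma pow_mul_zN_le [IsProbabilityMeasure (oneParticleLaw f)] (hf₀ : ∀ x v, 0 ≤ f x v)
    (hf : Integrable fun z : R3 × R3 => f z.1 z.2) {κ : ℝ≥0∞}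
    (hκ : ∀ w, oneParticleLaw f {z | ¬Nonoverlapping r z w} ≤ κ) {N : ℕ} {θ : ℝ} (hθ₀ : 0 ≤ θ)
    (hθ : ENNReal.ofReal θ ≤ 1 - N * κ) {m : ℕ} (hm : m ≤ N) :
    θ ^ (N - m) * ZN f m r ≤ ZN f N r := by
  rw [← ENNReal.ofReal_le_ofReal_iff (zN_nonneg hf₀ N r), ENNReal.ofReal_mul (by positivity),
    ENNReal.ofReal_pow hθ₀, ofReal_zN hf₀ hf, ofReal_zN hf₀ hf]
  exact (by gcongr : _ ≤ _).trans
    (one_sub_mul_pow_mul_pi_compatibleConfigs_le (measurableSet_nonoverlapping r) hκ hm)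

end OneParticleLaw

section Marginals

variable {f : R3 → R3 → ℝ} {r : ℝ} {N k : ℕ}

lemma zN_zero (f : R3 → R3 → ℝ) (r : ℝ) : ZN f 0 r = 1 := by
  have hvol : (volume : Measure ((Fin 0 → R3) × (Fin 0 → R3))) Set.univ = 1 := by
    rw [Measure.volume_eq_prod, ← Set.univ_prod_univ, Measure.prod_prod]
    simp [volume_pi]
  simp [ZN, OmegaSet, measureReal_def, hvol]

lemma prod_combine (hk : k ≤ N) (f : R3 → R3 → ℝ) (X V : Fin k → R3) (W U : Fin (N - k) → R3) :
    ∏ i, f (combine hk X W i) (combine hk V U i) =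
      (∏ i, f (X i) (V i)) * ∏ i, f (W i) (U i) := by
  rw [← Fintype.prod_equiv (finCongr (Nat.add_sub_of_le hk)) _ _ (fun _ => rfl),
    Fin.prod_univ_add]
  simp [combine]

lemma mem_omegaSet_of_combine_mem (hk : k ≤ N) {X : Fin k → R3} {W : Fin (N - k) → R3}
    (h : combine hk X W ∈ OmegaSet N r) : W ∈ OmegaSet (N - k) r := by
  intro i j hij
  simpa [combine] using
    h ⟨k + i, by omega⟩ ⟨k + j, by omega⟩ (by simpa [Fin.ext_iff] using hij)

lemma finitN_nonneg (hf₀ : ∀ x v, 0 ≤ f x v) (X V : Fin N → R3) : 0 ≤ FinitN f N r X V :=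
  mul_nonneg (mul_nonneg (inv_nonneg.2 (zN_nonneg hf₀ N r))
    (Set.indicator_nonneg (fun _ _ => zero_le_one) _)) (Finset.prod_nonneg fun _ _ => hf₀ _ _)

lemma finitN_combine_le (hf₀ : ∀ x v, 0 ≤ f x v) (hk : k ≤ N) (X V : Fin k → R3)
    (W U : Fin (N - k) → R3) :
    FinitN f N r (combine hk X W) (combine hk V U) ≤
      ((ZN f N r)⁻¹ * ∏ i, f (X i) (V i)) *
        ((OmegaSet (N - k) r).indicator (fun _ => (1 : ℝ)) W * ∏ i, f (W i) (U i)) := by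
  have hind : (OmegaSet N r).indicator (fun _ => (1 : ℝ)) (combine hk X W) ≤
      (OmegaSet (N - k) r).indicator (fun _ => (1 : ℝ)) W := by
    by_cases h : combine hk X W ∈ OmegaSet N r
    · simp [h, mem_omegaSet_of_combine_mem hk h]
    · simpa [h] using Set.indicator_nonneg (fun _ _ => zero_le_one) W
  have hZ := zN_nonneg hf₀ N r
  have hXV : 0 ≤ ∏ i, f (X i) (V i) := Finset.prod_nonneg fun i _ => hf₀ _ _
  have hWU : 0 ≤ ∏ i, f (W i) (U i) := Finset.prod_nonneg fun i _ => hf₀ _ _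
  rw [FinitN, prod_combine, mul_mul_mul_comm, mul_assoc, mul_assoc]
  gcongr

lemma abs_marginal_finitN_le (hf₀ : ∀ x v, 0 ≤ f x v)
    (hf : Integrable fun z : R3 × R3 => f z.1 z.2) (hk : k ≤ N) (X V : Fin k → R3) :
    |marginal N k hk (FinitN f N r) X V| ≤
      (ZN f N r)⁻¹ * (∏ i, f (X i) (V i)) * ZN f (N - k) r := by
  rw [marginal, abs_of_nonneg (integral_nonneg fun _ => finitN_nonneg hf₀ _ _), ZN.eq_def f (N - k),
    ← integral_const_mul]
  exact integral_mono_of_nonneg (.of_forall fun _ => finitN_nonneg hf₀ _ _)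
    ((integrable_indicator_mul_prod hf (N - k) r).const_mul _)
    (.of_forall fun W => finitN_combine_le hf₀ hk X V W.1 W.2)

lemma abs_margFam_finitN_le (hf₀ : ∀ x v, 0 ≤ f x v)
    (hf : Integrable fun z : R3 × R3 => f z.1 z.2) (hZ : 0 < ZN f N r) {θ : ℝ} (hθ : 0 < θ)
    (hratio : ∀ m ≤ N, θ ^ (N - m) * ZN f m r ≤ ZN f N r) (k : ℕ) (X V : Fin k → R3) :
    |margFam N (FinitN f N r) k X V| ≤ θ⁻¹ ^ k * ∏ i, f (X i) (V i) := by
  have hXV : 0 ≤ ∏ i, f (X i) (V i) := Finset.prod_nonneg fun i _ => hf₀ _ _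
  by_cases hk : k ≤ N
  · have hZk : ZN f (N - k) r ≤ θ⁻¹ ^ k * ZN f N r := by
      have h := hratio (N - k) (Nat.sub_le N k)
      rwa [Nat.sub_sub_self hk, ← le_inv_mul_iff₀ (by positivity), ← inv_pow] at h
    rw [margFam, dif_pos hk]
    calc |marginal N k hk (FinitN f N r) X V|
        ≤ (ZN f N r)⁻¹ * (∏ i, f (X i) (V i)) * ZN f (N - k) r :=
          abs_marginal_finitN_le hf₀ hf hk X V
      _ ≤ (ZN f N r)⁻¹ * (∏ i, f (X i) (V i)) * (θ⁻¹ ^ k * ZN f N r) := by gcongr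
      _ = θ⁻¹ ^ k * ∏ i, f (X i) (V i) := by field_simp
  · rw [margFam, dif_neg hk, abs_zero]
    positivity

end Marginals

section WeightedBound

variable {β μ : ℝ}

lemma prod_le_exp_neg {f : R3 → R3 → ℝ}
    (hf : ∀ x v : R3, 0 ≤ f x v ∧ f x v ≤ exp (-μ - β * ‖v‖ ^ 2 / 2)) {k : ℕ}
    (X V : Fin k → R3) :
    ∏ i, f (X i) (V i) ≤ exp (-μ * k - β * (∑ j, ‖V j‖ ^ 2) / 2) := by
  calc ∏ i, f (X i) (V i) ≤ ∏ i, exp (-μ - β * ‖V i‖ ^ 2 / 2) :=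
        Finset.prod_le_prod (fun _ _ => (hf _ _).1) fun _ _ => (hf _ _).2
    _ = exp (-μ * k - β * (∑ j, ‖V j‖ ^ 2) / 2) := by
        rw [← exp_sum, Finset.sum_sub_distrib, ← Finset.sum_div, ← Finset.mul_sum,
          Finset.sum_const, Finset.card_univ, Fintype.card_fin, nsmul_eq_mul, mul_comm]

lemma wnorm_le {k : ℕ} {c : ℝ} {g : (Fin k → R3) → (Fin k → R3) → ℝ}
    (hg : ∀ X V, |g X V| ≤ c * exp (-(β * (∑ j, ‖V j‖ ^ 2) / 2))) :
    wnorm k β g ≤ ENNReal.ofReal c :=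
  essSup_le_of_ae_le _ <| .of_forall fun Z => ENNReal.ofReal_le_ofReal <| by
    rw [← le_div_iff₀ (exp_pos _), div_eq_mul_inv, ← exp_neg]
    exact hg Z.1 Z.2

lemma seqnorm_le_one {g : (n : ℕ) → (Fin n → R3) → (Fin n → R3) → ℝ}
    (hg : ∀ n X V, |g n X V| ≤ exp (-μ * n - β * (∑ j, ‖V j‖ ^ 2) / 2)) :
    seqnorm μ β g ≤ 1 := by
  refine iSup_le fun n => ?_
  have hn : wnorm (n + 1) β (g (n + 1)) ≤ ENNReal.ofReal (exp (-μ * (n + 1))) :=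
    wnorm_le fun X V => by simpa [← exp_add, sub_eq_add_neg] using hg (n + 1) X V
  calc wnorm (n + 1) β (g (n + 1)) * ENNReal.ofReal (exp (μ * (n + 1)))
      ≤ ENNReal.ofReal (exp (-μ * (n + 1))) * ENNReal.ofReal (exp (μ * (n + 1))) := by gcongr
    _ = 1 := by
        rw [← ENNReal.ofReal_mul (exp_pos _).le, ← exp_add, neg_mul, neg_add_cancel, exp_zero,
          ENNReal.ofReal_one]

lemma integrable_exp_neg_sub_mul_sq (hβ : 0 < β) (μ : ℝ) :
    Integrable fun v : R3 => exp (-μ - β * ‖v‖ ^ 2 / 2) := by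
  refine ((integrable_rexp_neg_mul_sq_norm (half_pos hβ)).const_mul (exp (-μ))).congr
    (.of_forall fun v => ?_)
  simp only [← exp_add]
  ring_nf

end WeightedBound

lemma tendsto_natCast_mul_volume_closedBall_rBG {γ : ℝ} (hγ : 0 ≤ γ) :
    Tendsto (fun N : ℕ => N * volume (closedBall (0 : R3) (2 * rBG γ N))) atTop (𝓝 0) := by
  have hcube (N : ℕ) (hN : 0 < N) : N * √(γ / N) ^ 3 = γ * √(γ / N) := by
    rw [pow_succ, sq_sqrt (by positivity)]
    field_simp
  have hvol (N : ℕ) (hN : 0 < N) :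
      ENNReal.ofReal (γ * √(γ / N)) * volume (ball (0 : R3) 1) =
        N * volume (closedBall (0 : R3) (2 * rBG γ N)) := by
    rw [rBG, ← mul_assoc, mul_one_div_cancel two_ne_zero, one_mul,
      Measure.addHaar_closedBall _ _ (sqrt_nonneg _), finrank_euclideanSpace_fin, ← mul_assoc,
      ← ENNReal.ofReal_natCast, ← ENNReal.ofReal_mul N.cast_nonneg, hcube N hN]
  have hsqrt : Tendsto (fun N : ℕ => γ * √(γ / N)) atTop (𝓝 0) := by
    simpa using ((continuous_sqrt.tendsto 0).comp
      (tendsto_const_div_atTop_nhds_zero_nat γ)).const_mul γ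
  have hball : volume (ball (0 : R3) 1) ≠ ∞ := measure_ball_lt_top.ne
  have hlim : Tendsto (fun N : ℕ => ENNReal.ofReal (γ * √(γ / N)) * volume (ball (0 : R3) 1))
      atTop (𝓝 0) := by
    simpa using ENNReal.Tendsto.mul_const (ENNReal.tendsto_ofReal hsqrt)
      (.inr hball)
  exact hlim.congr' <| (eventually_gt_atTop 0).mono hvol

theorem marginals_uniform_weighted_bound_general {β₀ μ₀ μ₁ : ℝ} (hβ₀ : 0 < β₀) (hμ : μ₁ < μ₀)
    {f : R3 → R3 → ℝ}
    (hf_bound : ∀ x v : R3, 0 ≤ f x v ∧ f x v ≤ exp (-μ₀ - β₀ * ‖v‖ ^ 2 / 2))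
    (hf_norm : (∫ z : R3 × R3, f z.1 z.2) = 1) {r : ℕ → ℝ}
    (hr : Tendsto (fun N : ℕ => N * volume (closedBall (0 : R3) (2 * r N))) atTop (𝓝 0)) :
    ∀ᶠ N in atTop, 0 < ZN f N (r N) ∧ seqnorm μ₁ β₀ (margFam N (FinitN f N (r N))) ≤ 1 := by
  have hf₀ (x v : R3) : 0 ≤ f x v := (hf_bound x v).1
  have hf : Integrable fun z : R3 × R3 => f z.1 z.2 :=
    .of_integral_ne_zero (hf_norm ▸ one_ne_zero)
  have := isProbabilityMeasure_oneParticleLaw hf₀ hf_norm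
  set G := ∫⁻ v : R3, ENNReal.ofReal (exp (-μ₀ - β₀ * ‖v‖ ^ 2 / 2))
  have hG : G ≠ ∞ := (integrable_exp_neg_sub_mul_sq hβ₀ μ₀).lintegral_lt_top.ne
  have hfree : Tendsto (fun N : ℕ => 1 - N * (volume (closedBall (0 : R3) (2 * r N)) * G))
      atTop (𝓝 1) := by
    simpa [mul_assoc] using ENNReal.Tendsto.sub tendsto_const_nhds
      (ENNReal.Tendsto.mul_const hr (.inr hG)) (.inl ENNReal.one_ne_top)
  have hθ : ENNReal.ofReal (exp (μ₁ - μ₀)) < 1 := by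
    rw [ENNReal.ofReal_lt_one, exp_lt_one_iff]
    linarith
  filter_upwards [hfree.eventually_const_le hθ] with N hN
  have hratio (m : ℕ) (hm : m ≤ N) : exp (μ₁ - μ₀) ^ (N - m) * ZN f m (r N) ≤ ZN f N (r N) :=
    pow_mul_zN_le hf₀ hf (oneParticleLaw_not_nonoverlapping_le (by fun_prop)
      fun x v => (hf_bound x v).2) (exp_pos _).le hN hm
  have hZ : 0 < ZN f N (r N) :=
    lt_of_lt_of_le (by rw [zN_zero]; positivity) (hratio 0 N.zero_le)
  refine ⟨hZ, seqnorm_le_one fun k X V => ?_⟩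
  calc |margFam N (FinitN f N (r N)) k X V|
      ≤ (exp (μ₁ - μ₀))⁻¹ ^ k * ∏ i, f (X i) (V i) :=
        abs_margFam_finitN_le hf₀ hf hZ (exp_pos _) hratio k X V
    _ ≤ (exp (μ₁ - μ₀))⁻¹ ^ k * exp (-μ₀ * k - β₀ * (∑ j, ‖V j‖ ^ 2) / 2) := by
        gcongr
        exact prod_le_exp_neg hf_bound X V
    _ = exp (-μ₁ * k - β₀ * (∑ j, ‖V j‖ ^ 2) / 2) := by
        rw [← exp_neg, ← exp_nat_mul, ← exp_add]
        ring_nf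

/-- Uniform weighted bound for the marginals of admissible hard-sphere initial data in the
Boltzmann–Grad scaling `N(2r)² = γ`. -/
theorem marginals_uniform_weighted_bound (β₀ μ₀ γ : ℝ) (hβ₀ : 0 < β₀) (hγ : 0 < γ)
    (f : R3 → R3 → ℝ) (hf_cont : Continuous (Function.uncurry f))
    (hf_bound : ∀ x v : R3, 0 ≤ f x v ∧ f x v ≤ exp (-μ₀ - β₀ * ‖v‖ ^ 2 / 2))
    (hf_norm : (∫ z : R3 × R3, f z.1 z.2) = 1) :
    ∃ N₀ : ℕ, 1 ≤ N₀ ∧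
      (∀ N, N₀ ≤ N → 0 < ZN f N (rBG γ N)) ∧
      ∃ μ₁ : ℝ, μ₁ ≤ μ₀ ∧ ∃ M : ℝ≥0∞, M < ⊤ ∧
        ∀ N, N₀ ≤ N → seqnorm μ₁ β₀ (margFam N (FinitN f N (rBG γ N))) ≤ M := by
  obtain ⟨N₀, hN₀⟩ := eventually_atTop.1 <| (eventually_ge_atTop 1).and <|
    marginals_uniform_weighted_bound_general hβ₀ (sub_one_lt μ₀) hf_bound hf_norm
      (tendsto_natCast_mul_volume_closedBall_rBG hγ.le)
  exact ⟨N₀, (hN₀ N₀ le_rfl).1, fun N hN => (hN₀ N hN).2.1, μ₀ - 1, (sub_one_lt μ₀).le, 1,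
    ENNReal.one_lt_top, fun N hN => (hN₀ N hN).2.2⟩
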